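/- Let X be a δ-hyperbolic space with δ > 0, and set a = 1/(15δ). Then for all x, y, z ∈ X the distance cocycle satisfies |b_z(x,y)| ≤ d(x,y), and, assuming y ≠ z, d(x,y) + (2/a)·log ρ_x(y,z) ≤ b_z(x,y) ≤ d(x,y) + (2/a)·log ρ_x(y,z) + C2, where C2 = C2(δ) = (30 log 2)·δ. -/

import Mathlib

/-!
Writing `(y|z)` for the Gromov product at `x`, the cocycle is `b_z(x,y) = d(x,y) - 2 (y|z)`, so for
`y ≠ z` the two estimates say exactly that `ϱ_x(y,z)^a / 2 ≤ ρ_x(y,z) ≤ ϱ_x(y,z)^a`.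

The upper bound is the chain of length one. For the lower bound, slim triangles give
`min (y|w) (w|z) ≤ (y|z) + 4δ` (`min_gromovProduct_le`): by connectedness some point `p` of a side
`[y,z]` is close to both `[x,y]` and `[x,z]`, so that `d(x,p) ≤ (y|z) + 3δ`; moreover `p` is
`δ`-close to a point `q` of `[y,w] ∪ [w,z]`, and `d(x,q)` bounds `(y|w)` or `(w|z)` from above.
Hence `ϱ_x^a` satisfies a quasi-ultrametric inequality with constant `K = exp (4/15)`, and since
`K² ≤ 2`, Frink's chain argument (`le_two_mul_sum_chain`) bounds `ϱ_x(y,z)^a` by twice the length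
of any chain from `y` to `z`.
-/

open Metric Set Filter

/-- The Gromov product `(y|z)_x = (d(x,y) + d(x,z) - d(y,z))/2`. -/
noncomputable def gromovProduct {X : Type*} [MetricSpace X] (x y z : X) : ℝ :=
  (dist x y + dist x z - dist y z) / 2

/-- A geodesic segment joining `x` and `y`: the isometric image of the real
interval `[0, d(x,y)]` with endpoints `x` and `y`. -/
def IsGeodesicSegment {X : Type*} [MetricSpace X] (x y : X) (s : Set X) : Prop :=
  ∃ f : ℝ → X, f 0 = x ∧ f (dist x y) = y ∧ s = f '' Set.Icc (0 : ℝ) (dist x y) ∧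
    ∀ u ∈ Set.Icc (0 : ℝ) (dist x y), ∀ v ∈ Set.Icc (0 : ℝ) (dist x y),
      dist (f u) (f v) = |u - v|

/-- A geodesic metric space: any two points are joined by a geodesic segment. -/
def IsGeodesicSpace (X : Type*) [MetricSpace X] : Prop :=
  ∀ x y : X, ∃ s : Set X, IsGeodesicSegment x y s

/-- The Rips condition with constant `δ`: each side of every geodesic triangle is
contained in the `δ`-neighbourhood of the union of the other two sides. -/
def RipsCondition (X : Type*) [MetricSpace X] (δ : ℝ) : Prop :=
  ∀ x y z : X, ∀ s₁ s₂ s₃ : Set X,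
    IsGeodesicSegment x y s₁ → IsGeodesicSegment y z s₂ → IsGeodesicSegment x z s₃ →
    ∀ p ∈ s₃, ∃ q ∈ s₁ ∪ s₂, dist p q ≤ δ

/-- A `δ`-hyperbolic space: a non-compact complete proper geodesic metric space
satisfying the Rips condition with constant `δ`. -/
def IsDeltaHyperbolic (X : Type*) [MetricSpace X] (δ : ℝ) : Prop :=
  NoncompactSpace X ∧ CompleteSpace X ∧ ProperSpace X ∧ IsGeodesicSpace X ∧
    RipsCondition X δ

/-- The distance cocycle `b_z(x,y) = d(y,z) - d(x,z)` associated with a point `z`. -/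
noncomputable def distCocycle {X : Type*} [MetricSpace X] (z x y : X) : ℝ :=
  dist y z - dist x z

/-- The function `ϱ_x(y,z) = exp(-(y|z)_x)` for `y ≠ z`, and `ϱ_x(y,y) = 0`. -/
noncomputable def varrho {X : Type*} [MetricSpace X] (x y z : X) : ℝ :=
  open Classical in
  if y = z then 0 else Real.exp (-(gromovProduct x y z))

/-- The inner (pseudo)metric `ρ_x` determined by the function `ϱ_x ^ a`:
`ρ_x(y,z) = inf { ∑ ϱ_x(x_{i-1},x_i)^a : y = x_0, x_1, …, x_n = z }`. -/
noncomputable def rhoMetric {X : Type*} [MetricSpace X] (a : ℝ) (x y z : X) : ℝ :=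
  sInf {S : ℝ | ∃ (n : ℕ) (c : ℕ → X), 0 < n ∧ c 0 = y ∧ c n = z ∧
    S = ∑ i ∈ Finset.range n, varrho x (c i) (c (i + 1)) ^ a}

/-- Frink's chain lemma: the chain is cut at the first step `p` at which half of its length is
reached; the pieces before and after that step have at most half the length. -/
theorem le_two_mul_sum_chain {X : Type*} (D : X → X → ℝ) (K : ℝ) (hK1 : 1 ≤ K) (hK2 : K * K ≤ 2)
    (h0 : ∀ u v, 0 ≤ D u v) (hself : ∀ u, D u u = 0)
    (hD : ∀ u w v, D u v ≤ K * max (D u w) (D w v)) (n : ℕ) :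
    ∀ c : ℕ → X, D (c 0) (c n) ≤ 2 * ∑ i ∈ Finset.range n, D (c i) (c (i + 1)) := by
  induction n using Nat.strong_induction_on with
  | _ n ih =>
    intro c
    rcases Nat.eq_zero_or_pos n with rfl | hn
    · simp [hself]
    set F : ℕ → ℝ := fun k => ∑ i ∈ Finset.range k, D (c i) (c (i + 1)) with hF
    change D (c 0) (c n) ≤ 2 * F n
    have hFn : 0 ≤ F n := Finset.sum_nonneg fun _ _ => h0 _ _
    have hex : ∃ p, F n / 2 ≤ F (p + 1) := ⟨n - 1, by rw [Nat.sub_add_cancel hn]; linarith⟩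
    classical
    obtain ⟨p, hp, hmin⟩ : ∃ p, F n / 2 ≤ F (p + 1) ∧ ∀ q < p, F (q + 1) < F n / 2 :=
      ⟨Nat.find hex, Nat.find_spec hex, fun q hq => not_le.mp (Nat.find_min hex hq)⟩
    have hpn : p < n := by
      by_contra! hcon
      have := hmin (n - 1) (by omega)
      rw [Nat.sub_add_cancel hn] at this
      linarith
    have hFp : F p ≤ F n / 2 := by
      rcases p with _ | q
      · simp only [hF, Finset.range_zero, Finset.sum_empty]; linarith
      · exact (hmin q (by omega)).le
    have hsplit : F n = F (p + 1) +
        ∑ i ∈ Finset.range (n - (p + 1)), D (c (p + 1 + i)) (c (p + 1 + i + 1)) := by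
      have h := Finset.sum_range_add (fun i => D (c i) (c (i + 1))) (p + 1) (n - (p + 1))
      rwa [Nat.add_sub_cancel' (by omega : p + 1 ≤ n)] at h
    have hsucc : F (p + 1) = F p + D (c p) (c (p + 1)) := Finset.sum_range_succ _ _
    have hFp0 : 0 ≤ F p := Finset.sum_nonneg fun _ _ => h0 _ _
    have htail0 : 0 ≤ ∑ i ∈ Finset.range (n - (p + 1)),
        D (c (p + 1 + i)) (c (p + 1 + i + 1)) := Finset.sum_nonneg fun _ _ => h0 _ _
    have hleft : D (c 0) (c p) ≤ F n := (ih p hpn c).trans (by change 2 * F p ≤ F n; linarith)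
    have hmid : D (c p) (c (p + 1)) ≤ F n := by linarith
    have hright : D (c (p + 1)) (c n) ≤ F n := by
      have h := ih (n - (p + 1)) (by omega) fun i => c (p + 1 + i)
      simp only [add_zero, ← add_assoc, Nat.add_sub_cancel' (by omega : p + 1 ≤ n)] at h
      linarith
    have h1 : D (c p) (c n) ≤ K * F n :=
      (hD _ (c (p + 1)) _).trans (mul_le_mul_of_nonneg_left (max_le hmid hright) (by linarith))
    have h2 : D (c 0) (c n) ≤ K * (K * F n) :=
      (hD _ (c p) _).trans
        (mul_le_mul_of_nonneg_left (max_le (hleft.trans (by nlinarith)) h1) (by linarith))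
    nlinarith

theorem IsGeodesicSegment.dist_add_dist {X : Type*} [MetricSpace X] {x y p : X} {s : Set X}
    (h : IsGeodesicSegment x y s) (hp : p ∈ s) : dist x p + dist p y = dist x y := by
  obtain ⟨f, h0, h1, rfl, hf⟩ := h
  obtain ⟨t, ht, rfl⟩ := hp
  have e1 := hf 0 ⟨le_rfl, dist_nonneg⟩ t ht
  have e2 := hf t ht (dist x y) ⟨dist_nonneg, le_rfl⟩
  rw [h0, zero_sub, abs_neg, abs_of_nonneg ht.1] at e1
  rw [h1, abs_sub_comm, abs_of_nonneg (sub_nonneg.mpr ht.2)] at e2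
  linarith

theorem IsGeodesicSegment.left_mem {X : Type*} [MetricSpace X] {x y : X} {s : Set X}
    (h : IsGeodesicSegment x y s) : x ∈ s := by
  obtain ⟨f, h0, -, rfl, -⟩ := h
  exact ⟨0, ⟨le_rfl, dist_nonneg⟩, h0⟩

theorem IsGeodesicSegment.right_mem {X : Type*} [MetricSpace X] {x y : X} {s : Set X}
    (h : IsGeodesicSegment x y s) : y ∈ s := by
  obtain ⟨f, -, h1, rfl, -⟩ := h
  exact ⟨dist x y, ⟨dist_nonneg, le_rfl⟩, h1⟩

theorem IsGeodesicSegment.isPreconnected {X : Type*} [MetricSpace X] {x y : X} {s : Set X}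
    (h : IsGeodesicSegment x y s) : IsPreconnected s := by
  obtain ⟨f, -, -, rfl, hf⟩ := h
  refine isPreconnected_Icc.image f (LipschitzOnWith.continuousOn (K := 1) ?_)
  refine LipschitzOnWith.of_dist_le_mul fun u hu v hv => ?_
  rw [hf u hu v hv, Real.dist_eq, NNReal.coe_one, one_mul]

theorem gromovProduct_le_dist {X : Type*} [MetricSpace X] {y z p : X} {s : Set X}
    (h : IsGeodesicSegment y z s) (hp : p ∈ s) (x : X) : gromovProduct x y z ≤ dist x p := by
  have h1 := h.dist_add_dist hp
  have h2 := dist_triangle x p y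
  have h3 := dist_triangle x p z
  rw [dist_comm p y] at h2
  unfold gromovProduct
  linarith

/-- A side `[y,z]` of a triangle comes almost as close to the opposite vertex `x` as the Gromov
product: the point found is close to both of the other sides. -/
theorem exists_dist_le_gromovProduct_add {X : Type*} [MetricSpace X] {δ : ℝ} (hδ : 0 < δ)
    (hg : IsGeodesicSpace X) (hr : RipsCondition X δ) (x : X) {y z : X} {s : Set X}
    (hs : IsGeodesicSegment y z s) : ∃ p ∈ s, dist x p ≤ gromovProduct x y z + 3 * δ := by
  obtain ⟨s₁, h₁⟩ := hg y x
  obtain ⟨s₂, h₂⟩ := hg x z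
  have hclosed : ∀ t : Set X, IsClosed {p | infDist p t ≤ δ} := fun t =>
    isClosed_le (continuous_infDist_pt t) continuous_const
  obtain ⟨p, hps, hp1, hp2⟩ := isPreconnected_closed_iff.mp hs.isPreconnected
    {p | infDist p s₁ ≤ δ} {p | infDist p s₂ ≤ δ} (hclosed _) (hclosed _)
    (fun p hp => by
      obtain ⟨q, hq | hq, hd⟩ := hr y x z s₁ s₂ s h₁ h₂ hs p hp
      · exact Or.inl ((infDist_le_dist_of_mem hq).trans hd)
      · exact Or.inr ((infDist_le_dist_of_mem hq).trans hd))
    ⟨y, hs.left_mem, by simpa [infDist_zero_of_mem h₁.left_mem] using hδ.le⟩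
    ⟨z, hs.right_mem, by simpa [infDist_zero_of_mem h₂.right_mem] using hδ.le⟩
  -- Any constant larger than `δ` lets one pick points of the sides without using compactness.
  obtain ⟨q, hq, hpq⟩ := (infDist_lt_iff ⟨y, h₁.left_mem⟩).mp
    (lt_of_le_of_lt hp1 (by linarith : δ < 3 / 2 * δ))
  obtain ⟨r, hr, hpr⟩ := (infDist_lt_iff ⟨z, h₂.right_mem⟩).mp
    (lt_of_le_of_lt hp2 (by linarith : δ < 3 / 2 * δ))
  refine ⟨p, hps, ?_⟩
  have e1 := h₁.dist_add_dist hq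
  have e2 := h₂.dist_add_dist hr
  have e3 := hs.dist_add_dist hps
  have t1 := dist_triangle y q p
  have t2 := dist_triangle x q p
  have t3 := dist_triangle x r p
  have t4 := dist_triangle p r z
  rw [dist_comm q p] at t1 t2
  rw [dist_comm r p] at t3
  rw [dist_comm q x, dist_comm y x] at e1
  unfold gromovProduct
  linarith

/-- The four-point form of hyperbolicity. -/
theorem min_gromovProduct_le {X : Type*} [MetricSpace X] {δ : ℝ} (hδ : 0 < δ)
    (hg : IsGeodesicSpace X) (hr : RipsCondition X δ) (x y w z : X) :
    min (gromovProduct x y w) (gromovProduct x w z) ≤ gromovProduct x y z + 4 * δ := by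
  obtain ⟨s, hs⟩ := hg y z
  obtain ⟨s₁, h₁⟩ := hg y w
  obtain ⟨s₂, h₂⟩ := hg w z
  obtain ⟨p, hp, hxp⟩ := exists_dist_le_gromovProduct_add hδ hg hr x hs
  obtain ⟨q, hq, hpq⟩ := hr y w z s₁ s₂ s h₁ h₂ hs p hp
  have ht := dist_triangle x p q
  rcases hq with hq | hq
  · have := gromovProduct_le_dist h₁ hq x
    exact (min_le_left _ _).trans (by linarith)
  · have := gromovProduct_le_dist h₂ hq x
    exact (min_le_right _ _).trans (by linarith)

theorem varrho_nonneg {X : Type*} [MetricSpace X] (x y z : X) : 0 ≤ varrho x y z := by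
  unfold varrho
  split_ifs
  · exact le_rfl
  · exact (Real.exp_pos _).le

theorem varrho_self {X : Type*} [MetricSpace X] (x y : X) : varrho x y y = 0 := by
  simp [varrho]

theorem varrho_rpow_of_ne {X : Type*} [MetricSpace X] (a : ℝ) (x : X) {y z : X} (h : y ≠ z) :
    varrho x y z ^ a = Real.exp (-(a * gromovProduct x y z)) := by
  rw [varrho, if_neg h, ← Real.exp_mul]
  congr 1
  ring

theorem varrho_rpow_le {X : Type*} [MetricSpace X] {δ a : ℝ} (hδ : 0 < δ) (ha : 0 < a)
    (hg : IsGeodesicSpace X) (hr : RipsCondition X δ) (x y w z : X) :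
    varrho x y z ^ a ≤
      Real.exp (4 * δ * a) * max (varrho x y w ^ a) (varrho x w z ^ a) := by
  have hnn : ∀ u v, 0 ≤ varrho x u v ^ a := fun u v => Real.rpow_nonneg (varrho_nonneg x u v) a
  have hK : 1 ≤ Real.exp (4 * δ * a) := Real.one_le_exp (by positivity)
  have hmax : 0 ≤ max (varrho x y w ^ a) (varrho x w z ^ a) := le_max_of_le_left (hnn _ _)
  have htriv : max (varrho x y w ^ a) (varrho x w z ^ a) ≤
      Real.exp (4 * δ * a) * max (varrho x y w ^ a) (varrho x w z ^ a) :=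
    le_mul_of_one_le_left hmax hK
  rcases eq_or_ne y w with rfl | hyw
  · exact (le_max_right _ _).trans htriv
  rcases eq_or_ne w z with rfl | hwz
  · exact (le_max_left _ _).trans htriv
  rcases eq_or_ne y z with rfl | hyz
  · rw [varrho_self, Real.zero_rpow ha.ne']
    exact mul_nonneg (by linarith) hmax
  have key : ∀ g : ℝ, g ≤ gromovProduct x y z + 4 * δ →
      Real.exp (-(a * gromovProduct x y z)) ≤ Real.exp (4 * δ * a) * Real.exp (-(a * g)) := by
    intro g h
    rw [← Real.exp_add, Real.exp_le_exp]
    nlinarith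
  rw [varrho_rpow_of_ne a x hyw, varrho_rpow_of_ne a x hwz, varrho_rpow_of_ne a x hyz]
  rcases min_le_iff.mp (min_gromovProduct_le hδ hg hr x y w z) with h | h
  · exact (key _ h).trans (mul_le_mul_of_nonneg_left (le_max_left _ _) (by linarith))
  · exact (key _ h).trans (mul_le_mul_of_nonneg_left (le_max_right _ _) (by linarith))

theorem rhoMetric_le {X : Type*} [MetricSpace X] (a : ℝ) (x y z : X) :
    rhoMetric a x y z ≤ varrho x y z ^ a := by
  refine csInf_le ⟨0, ?_⟩ ⟨1, fun i => if i = 0 then y else z, one_pos, by simp, by simp, by simp⟩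
  rintro S ⟨n, c, -, -, -, rfl⟩
  exact Finset.sum_nonneg fun _ _ => Real.rpow_nonneg (varrho_nonneg _ _ _) a

theorem varrho_rpow_le_two_mul_rhoMetric {X : Type*} [MetricSpace X] {δ a : ℝ} (hδ : 0 < δ)
    (ha : a = 1 / (15 * δ)) (hg : IsGeodesicSpace X) (hr : RipsCondition X δ) (x y z : X) :
    varrho x y z ^ a ≤ 2 * rhoMetric a x y z := by
  have ha0 : 0 < a := by rw [ha]; positivity
  have hKsq : Real.exp (4 * δ * a) * Real.exp (4 * δ * a) ≤ 2 := by
    have h : 4 * δ * a + 4 * δ * a = 8 / 15 := by rw [ha]; field_simp; norm_num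
    rw [← Real.exp_add, h, ← Real.le_log_iff_exp_le two_pos]
    linarith [Real.log_two_gt_d9]
  have : varrho x y z ^ a / 2 ≤ rhoMetric a x y z := by
    refine le_csInf ⟨_, 1, fun i => if i = 0 then y else z, one_pos, by simp, by simp, rfl⟩ ?_
    rintro S ⟨n, c, -, rfl, rfl, rfl⟩
    have h := le_two_mul_sum_chain (fun u v => varrho x u v ^ a) _
      (Real.one_le_exp (by positivity)) hKsq
      (fun u v => Real.rpow_nonneg (varrho_nonneg x u v) a)
      (fun u => by simp only [varrho_self, Real.zero_rpow ha0.ne'])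
      (fun u w v => varrho_rpow_le hδ ha0 hg hr x u w v) n c
    linarith
  linarith

/-- Estimates for the distance cocycle in a `δ`-hyperbolic space:
`|b_z(x,y)| ≤ d(x,y)`, and for `y ≠ z`,
`d(x,y) + (2/a) log ρ_x(y,z) ≤ b_z(x,y) ≤ d(x,y) + (2/a) log ρ_x(y,z) + C₂`
where `a = 1/(15δ)` and `C₂ = (30 log 2) δ`. -/
theorem distCocycle_estimates
    {X : Type*} [MetricSpace X] (δ a C₂ : ℝ) (hδ : 0 < δ)
    (ha : a = 1 / (15 * δ)) (hC₂ : C₂ = 30 * Real.log 2 * δ)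
    (hX : IsDeltaHyperbolic X δ) (x y z : X) :
    |distCocycle z x y| ≤ dist x y ∧
      (y ≠ z →
        dist x y + (2 / a) * Real.log (rhoMetric a x y z) ≤ distCocycle z x y ∧
          distCocycle z x y
            ≤ dist x y + (2 / a) * Real.log (rhoMetric a x y z) + C₂) := by
  obtain ⟨-, -, -, hg, hr⟩ := hX
  refine ⟨?_, fun hyz => ?_⟩
  · unfold distCocycle
    rw [dist_comm x y]
    exact abs_dist_sub_le y x z
  have hb : distCocycle z x y = dist x y - 2 * gromovProduct x y z := by
    unfold distCocycle gromovProduct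
    ring
  have hlo := varrho_rpow_le_two_mul_rhoMetric hδ ha hg hr x y z
  have hup := rhoMetric_le a x y z
  rw [varrho_rpow_of_ne a x hyz] at hlo hup
  have hpos : 0 < rhoMetric a x y z := by
    linarith [Real.exp_pos (-(a * gromovProduct x y z))]
  have hlog_up : Real.log (rhoMetric a x y z) ≤ -(a * gromovProduct x y z) :=
    (Real.log_le_iff_le_exp hpos).mpr hup
  have hlog_lo : -(a * gromovProduct x y z) ≤ Real.log 2 + Real.log (rhoMetric a x y z) := by
    rw [← Real.log_mul two_ne_zero hpos.ne']
    exact (Real.le_log_iff_exp_le (by positivity)).mpr hlo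
  have h2a : 2 / a = 30 * δ := by rw [ha]; field_simp; norm_num
  have haδ : 30 * δ * (a * gromovProduct x y z) = 2 * gromovProduct x y z := by
    rw [ha]; field_simp; ring
  have h30 : 0 ≤ 30 * δ := by positivity
  have m1 := mul_le_mul_of_nonneg_left hlog_up h30
  have m2 := mul_le_mul_of_nonneg_left hlog_lo h30
  rw [hb, h2a, hC₂]
  constructor <;> linarith
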